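/- There exists a constant C > 0 such that for all natural numbers n ≥ 1, |S_{9,0}(n)| ≤ C · n^{ln 3 / ln 4}, i.e. S_{9,0}(n) = O(n^{0.79248...}), the same exponent as for S_{3,0}(n). -/

import Mathlib

/-- The Newman sum `S_{m,l}(x) = ∑_{0 ≤ n < x, n ≡ l (mod m)} (-1)^{σ(n)}`,
where `σ(n)` is the sum of the binary digits of `n`. -/
def newmanSum (m l x : ℕ) : ℤ :=
  ∑ n ∈ Finset.range x, if n % m = l then (-1 : ℤ) ^ ((Nat.digits 2 n).sum) else 0

def tm (n : ℕ) : ℤ := (-1 : ℤ) ^ ((Nat.digits 2 n).sum)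

lemma tm_zero : tm 0 = 1 := by simp [tm]

lemma tm_even (n : ℕ) : tm (2 * n) = tm n := by
  rcases Nat.eq_zero_or_pos n with h | h
  · subst h; rfl
  · have := Nat.digits_add 2 (by norm_num) 0 n (by norm_num) (Or.inr h.ne')
    rw [zero_add] at this
    simp [tm, this]

lemma tm_odd (n : ℕ) : tm (2 * n + 1) = - tm n := by
  have := Nat.digits_add 2 (by norm_num) 1 n (by norm_num) (Or.inl (by norm_num))
  rw [add_comm] at this
  unfold tm
  rw [this]
  simp [pow_add]

lemma tm_abs (n : ℕ) : |tm n| = 1 := by simp [tm]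

lemma tm_mul (k n : ℕ) : ∀ d, d < 2 ^ k → tm (2 ^ k * n + d) = tm n * tm d := by
  induction k with
  | zero => intro d hd; have : d = 0 := by simpa using hd
            subst this; simp [tm_zero]
  | succ k ih =>
    intro d hd
    rw [pow_succ] at hd
    obtain ⟨e, rfl | rfl⟩ := Nat.even_or_odd' d
    · have h : 2 ^ (k+1) * n + 2 * e = 2 * (2 ^ k * n + e) := by ring
      rw [h, tm_even, tm_even, ih e (by omega)]
    · have h : 2 ^ (k+1) * n + (2 * e + 1) = 2 * (2 ^ k * n + e) + 1 := by ring
      rw [h, tm_odd, tm_odd, ih e (by omega)]; ring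

def wsum (w : ℕ → ℤ) (x : ℕ) : ℤ := ∑ n ∈ Finset.range x, w (n % 9) * tm n

lemma wsum_block (w : ℕ → ℤ) (l : ℤ)
    (hw : ∀ r < 9, ∑ d ∈ Finset.range 64, w ((r + d) % 9) * tm d = l * w r) (x : ℕ) :
    wsum w (64 * x) = l * wsum w x := by
  induction x with
  | zero => simp [wsum]
  | succ x ih =>
    have h1 : wsum w (64 * (x + 1)) = wsum w (64 * x)
        + ∑ d ∈ Finset.range 64, w ((64 * x + d) % 9) * tm (64 * x + d) := by
      unfold wsum
      rw [mul_add, mul_one, Finset.sum_range_add]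
    have h2 : ∑ d ∈ Finset.range 64, w ((64 * x + d) % 9) * tm (64 * x + d)
        = tm x * ∑ d ∈ Finset.range 64, w ((x % 9 + d) % 9) * tm d := by
      rw [Finset.mul_sum]
      refine Finset.sum_congr rfl fun d hd => ?_
      have hd' := Finset.mem_range.mp hd
      have h3 := tm_mul 6 x d (by simpa using hd')
      norm_num at h3
      rw [h3, show (64 * x + d) % 9 = (x % 9 + d) % 9 by omega]
      ring
    rw [h1, h2, hw _ (Nat.mod_lt _ (by norm_num)), ih]
    unfold wsum
    rw [Finset.sum_range_succ]; ring

lemma wsum_short (w : ℕ → ℤ) (hb : ∀ r, |w r| ≤ 6) (x d : ℕ) (hd : d < 64) :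
    |wsum w (x + d) - wsum w x| ≤ 384 := by
  unfold wsum
  rw [Finset.sum_range_add, add_sub_cancel_left]
  refine (Finset.abs_sum_le_sum_abs _ _).trans ?_
  refine (Finset.sum_le_card_nsmul _ _ 6 ?_).trans ?_
  · intro i _
    rw [abs_mul, tm_abs, mul_one]; exact hb _
  · simp; omega

lemma pow64 : (64 : ℝ) ^ (Real.log 3 / Real.log 4) = 27 := by
  have h4 : Real.log 4 ≠ 0 := (Real.log_pos (by norm_num)).ne'
  rw [show (64 : ℝ) = 4 ^ (3 : ℕ) by norm_num, ← Real.rpow_natCast, ← Real.rpow_mul (by norm_num),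
    mul_comm, Real.rpow_mul (by norm_num), Real.rpow_def_of_pos (by norm_num : (0:ℝ) < 4),
    mul_div_cancel₀ _ h4, Real.exp_log (by norm_num)]
  norm_num

lemma wsum_bound (w : ℕ → ℤ) (l : ℤ) (hl : |l| ≤ 27) (hb : ∀ r, |w r| ≤ 6)
    (hw : ∀ r < 9, ∑ d ∈ Finset.range 64, w ((r + d) % 9) * tm d = l * w r) (n : ℕ) (hn : 1 ≤ n) :
    (|wsum w n| : ℝ) ≤ 399 * (n : ℝ) ^ (Real.log 3 / Real.log 4) - 15 := by
  have hα : 0 ≤ Real.log 3 / Real.log 4 :=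
    div_nonneg (Real.log_nonneg (by norm_num)) (Real.log_nonneg (by norm_num))
  induction n using Nat.strong_induction_on with
  | _ n ih =>
    by_cases h : n < 64
    · have h1 := wsum_short w hb 0 n h
      have h0 : wsum w 0 = 0 := by simp [wsum]
      rw [zero_add, h0, sub_zero] at h1
      have h2 : (|wsum w n| : ℝ) ≤ 384 := by exact_mod_cast h1
      have h3 : (1 : ℝ) ≤ (n : ℝ) ^ (Real.log 3 / Real.log 4) :=
        Real.one_le_rpow (by exact_mod_cast hn) hα
      linarith
    · have hx : 1 ≤ n / 64 := by omega
      have ihx := ih (n / 64) (by omega) hx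
      have h1 := wsum_short w hb (64 * (n / 64)) (n % 64) (Nat.mod_lt _ (by norm_num))
      rw [Nat.div_add_mod, wsum_block w l hw] at h1
      have h1' : |(wsum w n : ℝ) - l * wsum w (n / 64)| ≤ 384 := by exact_mod_cast h1
      have hl' : |(l : ℝ)| ≤ 27 := by exact_mod_cast hl
      have h2 : (|wsum w n| : ℝ) ≤ 384 + 27 * |(wsum w (n / 64) : ℝ)| := by
        calc (|wsum w n| : ℝ) = |((wsum w n : ℝ) - l * wsum w (n / 64)) + l * wsum w (n / 64)| := by
              rw [sub_add_cancel]
          _ ≤ _ := abs_add_le _ _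
          _ ≤ _ := by
            rw [abs_mul]
            gcongr
      have h3 : 27 * ((n / 64 : ℕ) : ℝ) ^ (Real.log 3 / Real.log 4)
          ≤ (n : ℝ) ^ (Real.log 3 / Real.log 4) := by
        rw [← pow64, ← Real.mul_rpow (by norm_num) (by positivity)]
        refine Real.rpow_le_rpow (by positivity) ?_ hα
        exact_mod_cast Nat.mul_div_le n 64
      linarith

def wA (_ : ℕ) : ℤ := 1
def wB (r : ℕ) : ℤ := if r % 3 = 0 then 2 else -1
def wC (r : ℕ) : ℤ := if r % 9 = 0 then 6 else if r % 3 = 0 then -3 else 0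

lemma eig (w : ℕ → ℤ) (r : ℕ) : ∑ d ∈ Finset.range 64, w ((r + d) % 9) * tm d =
    8 * w (r % 9) + 5 * w ((r + 3) % 9) + 5 * w ((r + 6) % 9)
    - 3 * (w ((r + 1) % 9) + w ((r + 2) % 9) + w ((r + 4) % 9) + w ((r + 5) % 9)
      + w ((r + 7) % 9) + w ((r + 8) % 9)) := by
  have hm : ∀ k, w ((r + (k + 9)) % 9) = w ((r + k) % 9) := by
    intro k; congr 1; omega
  have h : ∑ d ∈ Finset.range 64, w ((r + d) % 9) * tm d
     = ∑ d ∈ Finset.range 64, w ((r + d % 9) % 9) * tm d := by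
    refine Finset.sum_congr rfl fun d _ => ?_
    rw [show (r + d) % 9 = (r + d % 9) % 9 by omega]
  rw [h]
  simp [Finset.sum_range_succ, tm, -Nat.add_mod_mod]
  ring

theorem stmt_12 :
    ∃ C : ℝ, 0 < C ∧ ∀ n : ℕ, 1 ≤ n →
      (|newmanSum 9 0 n| : ℝ) ≤ C * (n : ℝ) ^ (Real.log 3 / Real.log 4) := by
  refine ⟨399, by norm_num, fun n hn => ?_⟩
  have hA := wsum_bound wA 0 (by norm_num) (by intro r; simp [wA])
    (by intro r hr; rw [eig]; simp [wA]) n hn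
  have hB := wsum_bound wB 27 (by norm_num) (by intro r; unfold wB; split_ifs <;> norm_num)
    (by intro r hr; rw [eig]; interval_cases r <;> simp [wB]) n hn
  have hC := wsum_bound wC 3 (by norm_num) (by intro r; unfold wC; split_ifs <;> norm_num)
    (by intro r hr; rw [eig]; interval_cases r <;> simp [wC]) n hn
  have hS : 9 * newmanSum 9 0 n = wsum wA n + wsum wB n + wsum wC n := by
    unfold newmanSum wsum
    rw [Finset.mul_sum, ← Finset.sum_add_distrib, ← Finset.sum_add_distrib]
    refine Finset.sum_congr rfl fun k _ => ?_
    change 9 * (if k % 9 = 0 then tm k else 0) = _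
    have : k % 9 < 9 := Nat.mod_lt _ (by norm_num)
    generalize k % 9 = r at *
    interval_cases r <;> simp [wA, wB, wC] <;> ring
  have hS' : (9 : ℝ) * newmanSum 9 0 n = wsum wA n + wsum wB n + wsum wC n := by exact_mod_cast hS
  have hp : 0 ≤ (n : ℝ) ^ (Real.log 3 / Real.log 4) := by positivity
  push_cast at *
  rw [abs_le] at *
  constructor <;> linarith [hA.1, hA.2, hB.1, hB.2, hC.1, hC.2]
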